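/- Let I ⊆ ℝ be an interval and let φ, ψ : I → ℝ be twice differentiable functions satisfying, for all t ∈ I: φ(t) > 0, ψ(t) > 0, φ'(t) ≤ −φ(t), φ''(t) ≤ φ(t), −ψ(t) ≤ ψ'(t) ≤ 0, |ψ''(t)| ≤ −ψ'(t), and (1 − φ'(t)/φ(t))·ψ'(t) ≥ −2·ψ(t). Then for all t ∈ I one has −φ''(t)/φ(t) − 2·(φ'(t)/φ(t))·(ψ'(t)/ψ(t)) + (φ'(t)/φ(t))² ≥ −2. -/

import Mathlib

theorem neg_sq_le_sq_sub_two_mul_mul {R : Type*} [CommRing R] [LinearOrder R]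
    [IsStrictOrderedRing R] {x y k : R} (hx : x ≤ 0) (hy : -k ≤ y) :
    -k ^ 2 ≤ x ^ 2 - 2 * x * y := by
  have cross_term : x * y ≤ x * -k := mul_le_mul_of_nonpos_left hy hx
  calc
    -k ^ 2 ≤ (x + k) ^ 2 - k ^ 2 := by linarith [sq_nonneg (x + k)]
    _ = x ^ 2 - 2 * (x * -k) := by ring
    _ ≤ x ^ 2 - 2 * (x * y) := by linarith
    _ = x ^ 2 - 2 * x * y := by ring

theorem stmt3_general (I : Set ℝ) (φ φ' φ'' ψ ψ' : ℝ → ℝ)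
    (_hφd : ∀ t ∈ I, HasDerivAt φ (φ' t) t)
    (_hφd' : ∀ t ∈ I, HasDerivAt φ' (φ'' t) t)
    (_hψd : ∀ t ∈ I, HasDerivAt ψ (ψ' t) t)
    (hφpos : ∀ t ∈ I, 0 < φ t)
    (hψpos : ∀ t ∈ I, 0 < ψ t)
    (hφ1 : ∀ t ∈ I, φ' t ≤ 0)
    (hφ2 : ∀ t ∈ I, φ'' t ≤ φ t)
    (hψ1 : ∀ t ∈ I, -ψ t ≤ ψ' t) :
    ∀ t ∈ I,
      -(φ'' t) / φ t - 2 * (φ' t / φ t) * (ψ' t / ψ t)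
        + (φ' t / φ t) ^ 2 ≥ -2 := by
  intro t ht
  have hφ_logDeriv : φ' t / φ t ≤ 0 :=
    div_nonpos_of_nonpos_of_nonneg (hφ1 t ht) (hφpos t ht).le
  have hψ_logDeriv : -1 ≤ ψ' t / ψ t :=
    (le_div_iff₀ (hψpos t ht)).2 ((neg_one_mul (ψ t)).trans_le (hψ1 t ht))
  have hφ_second : -1 ≤ -(φ'' t) / φ t :=
    (le_div_iff₀ (hφpos t ht)).2 <|
      (neg_one_mul (φ t)).trans_le (neg_le_neg (hφ2 t ht))
  linarith [neg_sq_le_sq_sub_two_mul_mul hφ_logDeriv hψ_logDeriv]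

/-- Lower bound `≥ -2` on the `S¹-direction coefficient of the Ricci curvature of the
doubly warped product metric `dt² + ψ² g_{T²} + φ² g_{S¹}`, under the
conditions imposed on the warping functions in the paper. -/
theorem stmt3 (I : Set ℝ) (hI : I.OrdConnected)
    (φ φ' φ'' ψ ψ' ψ'' : ℝ → ℝ)
    (hφd : ∀ t ∈ I, HasDerivAt φ (φ' t) t)
    (hφd' : ∀ t ∈ I, HasDerivAt φ' (φ'' t) t)
    (hψd : ∀ t ∈ I, HasDerivAt ψ (ψ' t) t)
    (hψd' : ∀ t ∈ I, HasDerivAt ψ' (ψ'' t) t)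
    (hφpos : ∀ t ∈ I, 0 < φ t)
    (hψpos : ∀ t ∈ I, 0 < ψ t)
    (hφ1 : ∀ t ∈ I, φ' t ≤ -φ t)
    (hφ2 : ∀ t ∈ I, φ'' t ≤ φ t)
    (hψ1 : ∀ t ∈ I, -ψ t ≤ ψ' t)
    (hψ2 : ∀ t ∈ I, ψ' t ≤ 0)
    (hψ3 : ∀ t ∈ I, |ψ'' t| ≤ -ψ' t)
    (hψ4 : ∀ t ∈ I, (1 - φ' t / φ t) * ψ' t ≥ -2 * ψ t) :
    ∀ t ∈ I,
      -(φ'' t) / φ t - 2 * (φ' t / φ t) * (ψ' t / ψ t)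
        + (φ' t / φ t) ^ 2 ≥ -2 :=
  stmt3_general I φ φ' φ'' ψ ψ' hφd hφd' hψd hφpos hψpos
    (fun t ht ↦ (hφ1 t ht).trans (neg_nonpos.2 (hφpos t ht).le)) hφ2 hψ1
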